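/- Let k be a field, G a bipartite graph on X ⊔ Y with edge ideal I ⊆ k[X ⊔ Y], and J the associated Ferrers ideal. Then β_{i,X',•}(I) = β_{i,X',•}(J) holds for all subsets X' ⊆ X and all i ≥ 0 if and only if G is nearly row-nested. -/

import Mathlib

open Finset

/-- An abstract simplicial complex on the vertex type `V`: a collection of
finite subsets of `V` (the *faces*) closed under taking subsets. -/
structure SimpComplex (V : Type*) where
  faces : Set (Finset V)
  down_closed : ∀ F ∈ faces, ∀ G ⊆ F, G ∈ faces

namespace SimpComplex

variable {V : Type*}

/-- The induced subcomplex `Γ[W]` of `Γ` on a set `W` of vertices. -/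
def induced (K : SimpComplex V) (W : Finset V) : SimpComplex V where
  faces := {F | F ∈ K.faces ∧ F ⊆ W}
  down_closed := fun F hF G hG => ⟨K.down_closed F hF.1 G hG, hG.trans hF.2⟩

/-- A simplicial complex is a cone with apex `v` if `v` belongs to every
maximal face. -/
def IsConeWithApex (K : SimpComplex V) (v : V) : Prop :=
  ∀ F ∈ K.faces, (∀ G ∈ K.faces, F ⊆ G → G = F) → v ∈ F

variable [LinearOrder V] [Fintype V] (k : Type*) [Field k]

/-- The faces of cardinality `c` of a simplicial complex, as a type. -/
def Face (K : SimpComplex V) (c : ℕ) : Type _ :=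
  {F : Finset V // F ∈ K.faces ∧ F.card = c}

/-- The space of simplicial chains with coefficients in `k` in (reduced)
homological degree `c - 1`; it has a basis indexed by the faces of
cardinality `c`. -/
abbrev Chains (K : SimpComplex V) (c : ℕ) : Type _ := Face K c → k

/-- The simplicial boundary map, from chains on faces of cardinality `c + 1`
to chains on faces of cardinality `c`, expressed in coordinates:  the
coefficient of a face `G` in `∂ x` is a signed sum of the coefficients of
`x` at the faces `G ∪ {v}`, with the usual signs determined by the linear
order on the vertices. -/
noncomputable def boundary (K : SimpComplex V) (c : ℕ) :
    Chains k K (c + 1) →ₗ[k] Chains k K c where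
  toFun x G := ∑ v ∈ (Finset.univ \ G.1).attach,
    letI := Classical.dec (insert v.1 G.1 ∈ K.faces)
    if h : insert v.1 G.1 ∈ K.faces then
      ((-1 : k) ^ (G.1.filter (fun w => w < v.1)).card) *
        x ⟨insert v.1 G.1, h, by
          have hv : v.1 ∉ G.1 := (Finset.mem_sdiff.mp v.2).2
          rw [Finset.card_insert_of_notMem hv, G.2.2]⟩
    else 0
  map_add' x y := by
    funext G
    simp only [Pi.add_apply]
    rw [← Finset.sum_add_distrib]
    refine Finset.sum_congr rfl fun v _ => ?_
    split
    · exact mul_add _ (x _) (y _)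
    · simp
  map_smul' a x := by
    funext G
    simp only [Pi.smul_apply, RingHom.id_apply, smul_eq_mul, Finset.mul_sum]
    refine Finset.sum_congr rfl fun v _ => ?_
    split
    · exact mul_left_comm _ a (x _)
    · simp

/-- The `j`-th reduced simplicial homology `H̃_j(K; k)` (for `j : ℕ`):
cycles supported on faces of cardinality `j + 1` modulo boundaries of chains on
faces of cardinality `j + 2`.  (Note that the empty set is a face of every
nonvoid complex, so this is reduced homology.) -/
@[reducible] noncomputable def reducedHomology (K : SimpComplex V) (j : ℕ) : Type _ :=
  LinearMap.ker (boundary k K j) ⧸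
    Submodule.comap (LinearMap.ker (boundary k K j)).subtype
      (LinearMap.range (boundary k K (j + 1)))

/-- The `j`-th reduced Betti number `β̃_j(K) = dim_k H̃_j(K; k)`. -/
noncomputable def reducedBetti (K : SimpComplex V) (j : ℕ) : ℕ :=
  Module.finrank k (reducedHomology k K j)

/-- Hochster's formula, used as the definition of the fine graded Betti numbers
(graded by squarefree multidegrees, i.e. by subsets `W` of the variables) of
the squarefree monomial ideal `I_K` whose Stanley–Reisner complex is `K`:
`β_{i,W}(I_K) = dim_k H̃_{|W| - i - 2}(K[W]; k)`. -/
noncomputable def bettiFine (K : SimpComplex V) (i : ℕ) (W : Finset V) : ℕ :=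
  if i + 2 ≤ W.card then reducedBetti k (K.induced W) (W.card - i - 2) else 0

/-- The total (ungraded) Betti number `β_i`, the sum of all the fine graded
Betti numbers. -/
noncomputable def totalBetti (K : SimpComplex V) (i : ℕ) : ℕ :=
  ∑ W : Finset V, bettiFine k K i W

end SimpComplex

open SimpComplex

/-- The vertex `x_i` of `X = {x_1, …, x_n}` inside `X ⊔ Y = Fin (n + m)`. -/
def xVert {n m : ℕ} (i : Fin n) : Fin (n + m) := Fin.castAdd m i

/-- The vertex `y_j` of `Y = {y_1, …, y_m}` inside `X ⊔ Y = Fin (n + m)`. -/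
def yVert {n m : ℕ} (j : Fin m) : Fin (n + m) := Fin.natAdd n j

/-- A bipartite graph `G` on `X ⊔ Y` is given by its edge set `E ⊆ X × Y`.
`nbr E i` is the neighborhood `N(x_i) ⊆ Y` of the vertex `x_i` in `G`. -/
def nbr {n m : ℕ} (E : Finset (Fin n × Fin m)) (i : Fin n) : Finset (Fin m) :=
  Finset.univ.filter fun j => (i, j) ∈ E

/-- The degree `deg_G x_i = |N(x_i)|`. -/
def degG {n m : ℕ} (E : Finset (Fin n × Fin m)) (i : Fin n) : ℕ := (nbr E i).card

/-- The Ferrers graph `H` associated to the bipartite graph `E`: the vertex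
`x_i` is joined to exactly `y_1, …, y_{deg_G x_i}`. -/
def ferrers {n m : ℕ} (E : Finset (Fin n × Fin m)) : Finset (Fin n × Fin m) :=
  Finset.univ.filter fun p => (p.2 : ℕ) < degG E p.1

/-- The independence complex of the bipartite graph `E` (faces are the subsets
of `X ⊔ Y` containing no edge), i.e. the Stanley–Reisner complex `Δ(I)` of the
edge ideal `I` of `E`. -/
def indepComplex {n m : ℕ} (E : Finset (Fin n × Fin m)) : SimpComplex (Fin (n + m)) where
  faces := {F | ∀ p ∈ E, ¬(xVert p.1 ∈ F ∧ yVert p.2 ∈ F)}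
  down_closed := fun _ hF _ hG p hp hc => hF p hp ⟨hG hc.1, hG hc.2⟩

/-- The subset `X' ⊔ Y'` of the vertex set `X ⊔ Y = Fin (n + m)`. -/
def vset {n m : ℕ} (X' : Finset (Fin n)) (Y' : Finset (Fin m)) : Finset (Fin (n + m)) :=
  X'.image xVert ∪ Y'.image yVert

/-- The `ℤ^n`-graded Betti number `β_{i,X',•}(I)` of the edge ideal `I` of the
bipartite graph `E`, in the grading with `deg x_i = e_i` and `deg y_j = 0`:
it is the sum of the fine graded Betti numbers `β_{i, X' ⊔ Y'}(I)` over all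
`Y' ⊆ Y`. -/
noncomputable def bettiCoarse (k : Type*) [Field k] {n m : ℕ}
    (E : Finset (Fin n × Fin m)) (i : ℕ) (X' : Finset (Fin n)) : ℕ :=
  ∑ Y' : Finset (Fin m), bettiFine k (indepComplex E) i (vset X' Y')

/-- The binomial coefficient `C(a, b)` with an integer lower argument, which is
zero when `b < 0`. -/
def chooseInt (a : ℕ) (b : ℤ) : ℕ := if 0 ≤ b then a.choose b.toNat else 0

/-- `G` is *nearly row-nested*: whenever `|N(x₁)| < |N(x₂)|` one has
`N(x₁) ⊂ N(x₂)`, and for every occurring value `c` of `|N(x)|`, the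
intersection of all the neighborhoods of cardinality `c` has at least
`c - 1` elements. -/
def NearlyRowNested {n m : ℕ} (E : Finset (Fin n × Fin m)) : Prop :=
  (∀ x1 x2 : Fin n, (nbr E x1).card < (nbr E x2).card → nbr E x1 ⊂ nbr E x2) ∧
    ∀ c : ℕ, (∃ x : Fin n, (nbr E x).card = c) →
      c - 1 ≤ (Finset.univ.filter fun j : Fin m =>
        ∀ x : Fin n, (nbr E x).card = c → j ∈ nbr E x).card

/-!
On functions on finite vertex sets, the simplicial boundary is `∑ v, ∂_v`, where `∂_v` contracts
with the vertex `v`. Wedging with `v` and `∂` satisfy a Clifford relation, whence cones are acyclic.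
Comparing a complex with the deletion and the link of a vertex then gives two reductions for
independence complexes of graphs: a vertex whose neighborhood contains that of another vertex can
be deleted, and a leaf can be removed together with its neighbor at the cost of a degree shift.

For a nearly row-nested graph and nonempty `X' ⊆ X`, vertices of larger degree dominate and can be
deleted, so only the vertices of minimal degree `d` matter. Their neighborhoods share a core
of `d - 1` vertices, each completed by one further vertex, and the reductions show that
`β_{i,X',•}` depends only on `d`, `i` and `|X'|`. The Ferrers graph is nearly row-nested with the
same degrees.

Conversely, each minimal transversal of the neighborhoods of the vertices in `X'` contributes one to
`β_{|X'|-1,X',•}`, while the Ferrers value of this number is the minimal degree. Counting minimal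
transversals for `|X'| = 2` and `|X'| = 3` forces the graph to be nearly row-nested.
-/

lemma finrank_quotient_submoduleOf_eq {R M N : Type*} [Ring R] [AddCommGroup M] [Module R M]
    [AddCommGroup N] [Module R N] (f : M →ₗ[R] N) {Z B : Submodule R M} {Z' B' : Submodule R N}
    (hZ : ∀ x ∈ Z, f x ∈ Z') (hB : ∀ x ∈ Z, (f x ∈ B' ↔ x ∈ B))
    (hsurj : ∀ z ∈ Z', ∃ x ∈ Z, z - f x ∈ B') :
    Module.finrank R (Z ⧸ B.submoduleOf Z) = Module.finrank R (Z' ⧸ B'.submoduleOf Z') := by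
  let g : Z →ₗ[R] Z' ⧸ B'.submoduleOf Z' := (Submodule.mkQ _).comp (f.restrict hZ)
  have hker : LinearMap.ker g = B.submoduleOf Z := by
    ext x
    simp only [g, LinearMap.mem_ker, LinearMap.comp_apply, Submodule.mkQ_apply,
      Submodule.Quotient.mk_eq_zero]
    exact hB x x.2
  have hg : Function.Surjective g := by
    intro q
    obtain ⟨z, rfl⟩ := Submodule.mkQ_surjective _ q
    obtain ⟨x, hx, hzx⟩ := hsurj z z.2
    exact ⟨⟨x, hx⟩, ((Submodule.Quotient.eq (B'.submoduleOf Z')).2 hzx).symm⟩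
  rw [← hker]
  exact (g.quotKerEquivOfSurjective hg).finrank_eq

namespace SimpComplex

section Operators

variable {V : Type*} [LinearOrder V] {k : Type*} [CommRing k]

/-- The sign `(-1)^{#{w ∈ F : w < v}}` of the position of the vertex `v` relative to `F`. -/
def insertSign (k : Type*) [CommRing k] (v : V) (F : Finset V) : k := (-1) ^ #{w ∈ F | w < v}

lemma insertSign_mul_self (v : V) (F : Finset V) : insertSign k v F * insertSign k v F = 1 := by
  simp [insertSign, ← mul_pow]

lemma insertSign_insert_self (v : V) (F : Finset V) :
    insertSign k v (insert v F) = insertSign k v F := by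
  simp [insertSign, filter_insert]

lemma insertSign_insert_of_lt {v w : V} {F : Finset V} (hw : w ∉ F) (h : w < v) :
    insertSign k v (insert w F) = -insertSign k v F := by
  rw [insertSign, insertSign, filter_insert, if_pos h, card_insert_of_notMem (by simp [hw]),
    pow_succ, mul_neg_one]

lemma insertSign_insert_of_gt {v w : V} {F : Finset V} (h : v < w) :
    insertSign k v (insert w F) = insertSign k v F := by
  rw [insertSign, insertSign, filter_insert, if_neg h.not_gt]

lemma insertSign_erase_self (v : V) (F : Finset V) :
    insertSign k v (F.erase v) = insertSign k v F := by
  rw [insertSign, filter_erase, erase_eq_of_notMem (by simp), insertSign]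

lemma insertSign_insert_mul_insertSign_insert {v w : V} {F : Finset V} (hvw : v ≠ w)
    (hv : v ∉ F) (hw : w ∉ F) :
    insertSign k v (insert w F) * insertSign k w (insert v F) =
      -(insertSign k v F * insertSign k w F) := by
  rcases hvw.lt_or_gt with h | h
  · rw [insertSign_insert_of_lt hv h, insertSign_insert_of_gt h, mul_neg]
  · rw [insertSign_insert_of_gt h, insertSign_insert_of_lt hw h, neg_mul]

lemma insertSign_mul_insertSign_insert {v w : V} {F : Finset V} (hvw : v ≠ w) (hv : v ∉ F)
    (hw : w ∉ F) :
    insertSign k v F * insertSign k w (insert v F) =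
      -(insertSign k w F * insertSign k v (insert w F)) := by
  linear_combination
    insertSign k v F * insertSign k v (insert w F) *
        insertSign_insert_mul_insertSign_insert (k := k) hvw hv hw -
      insertSign k v F * insertSign k w (insert v F) *
        insertSign_mul_self (k := k) v (insert w F) -
      insertSign k w F * insertSign k v (insert w F) * insertSign_mul_self (k := k) v F

/-- Interior multiplication by the vertex `v`, on functions on all finite vertex sets. The
simplicial boundary is the sum of these operators over all vertices. -/
def contract (k : Type*) [CommRing k] (v : V) : (Finset V → k) →ₗ[k] (Finset V → k) :=
  .pi fun F => if v ∈ F then 0 else insertSign k v F • .proj (insert v F)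

/-- Exterior multiplication by the vertex `v`, on functions on all finite vertex sets. On cycles it
produces the cone with apex `v`. -/
def wedge (k : Type*) [CommRing k] (v : V) : (Finset V → k) →ₗ[k] (Finset V → k) :=
  .pi fun F => if v ∈ F then insertSign k v F • .proj (F.erase v) else 0

lemma contract_apply (v : V) (x : Finset V → k) (F : Finset V) :
    contract k v x F = if v ∈ F then 0 else insertSign k v F * x (insert v F) := by
  by_cases h : v ∈ F <;> simp [contract, h]

lemma wedge_apply (v : V) (x : Finset V → k) (F : Finset V) :
    wedge k v x F = if v ∈ F then insertSign k v F * x (F.erase v) else 0 := by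
  by_cases h : v ∈ F <;> simp [wedge, h]

lemma contract_contract_self (v : V) (x : Finset V → k) : contract k v (contract k v x) = 0 := by
  funext F
  simp [contract_apply]

lemma contract_anticomm {v w : V} (hvw : v ≠ w) (x : Finset V → k) :
    contract k v (contract k w x) = -contract k w (contract k v x) := by
  funext F
  simp only [contract_apply, Pi.neg_apply, mem_insert, hvw, hvw.symm, false_or]
  by_cases hv : v ∈ F
  · simp [hv]
  by_cases hw : w ∈ F
  · simp [hw]
  simp only [hv, hw, if_false, ← mul_assoc]
  rw [insertSign_mul_insertSign_insert hvw hv hw, insert_comm, neg_mul]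

lemma contract_wedge_anticomm {v w : V} (hvw : v ≠ w) (x : Finset V → k) :
    contract k v (wedge k w x) = -wedge k w (contract k v x) := by
  funext F
  simp only [contract_apply, wedge_apply, Pi.neg_apply, mem_insert, mem_erase, hvw, hvw.symm,
    false_or, ne_eq, not_false_eq_true, true_and]
  by_cases hv : v ∈ F
  · simp [hv]
  by_cases hw : w ∈ F
  · obtain ⟨G, hwG, rfl⟩ : ∃ G, w ∉ G ∧ insert w G = F :=
      ⟨F.erase w, notMem_erase w F, insert_erase hw⟩
    have hvG : v ∉ G := fun h => hv (mem_insert_of_mem h)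
    have hwvG : w ∉ insert v G := by simp [hwG, hvw.symm]
    simp only [hv, hw, if_true, if_false, ← mul_assoc]
    rw [erase_insert hwG, insert_comm v w, erase_insert hwvG, insertSign_insert_self,
      insertSign_insert_self, insertSign_insert_mul_insertSign_insert hvw hvG hwG, neg_mul,
      mul_comm (insertSign k v G)]
  · simp [hw]

lemma contract_wedge_add_wedge_contract (v : V) (x : Finset V → k) :
    contract k v (wedge k v x) + wedge k v (contract k v x) = x := by
  funext F
  by_cases hv : v ∈ F
  · simp [contract_apply, wedge_apply, hv, insertSign_erase_self, ← mul_assoc,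
      insertSign_mul_self]
  · simp [contract_apply, wedge_apply, hv, insertSign_insert_self, ← mul_assoc,
      insertSign_mul_self]

lemma contract_eq_zero_iff {v : V} {x : Finset V → k} :
    contract k v x = 0 ↔ ∀ F, v ∈ F → x F = 0 := by
  refine ⟨fun h F hv => ?_, fun h => ?_⟩
  · have hx : wedge k v (contract k v x) F = x F := by
      simp [wedge_apply, contract_apply, hv, insertSign_erase_self, ← mul_assoc,
        insertSign_mul_self]
    rw [← hx, h, map_zero, Pi.zero_apply]
  · funext F
    simp [contract_apply, h]

variable [Fintype V]

/-- The simplicial boundary operator of the full simplex on `V`, in all degrees at once. -/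
def totalBoundary : (Finset V → k) →ₗ[k] (Finset V → k) := ∑ v, contract k v

lemma totalBoundary_apply (x : Finset V → k) : totalBoundary x = ∑ v, contract k v x :=
  LinearMap.sum_apply ..

lemma totalBoundary_contract (b : V) (x : Finset V → k) :
    totalBoundary (contract k b x) = -contract k b (totalBoundary x) := by
  rw [totalBoundary_apply, totalBoundary_apply, map_sum, ← sum_neg_distrib]
  refine sum_congr rfl fun v _ => ?_
  obtain rfl | h := eq_or_ne v b
  · rw [contract_contract_self, neg_zero]
  · exact contract_anticomm h x

lemma totalBoundary_wedge (b : V) (x : Finset V → k) :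
    totalBoundary (wedge k b x) = x - wedge k b (totalBoundary x) := by
  rw [eq_sub_iff_add_eq, totalBoundary_apply, totalBoundary_apply, map_sum, ← sum_add_distrib,
    sum_eq_single b, contract_wedge_add_wedge_contract]
  · intro v _ hvb
    rw [contract_wedge_anticomm hvb, neg_add_cancel]
  · simp

lemma totalBoundary_totalBoundary (x : Finset V → k) : totalBoundary (totalBoundary x) = 0 := by
  simp only [totalBoundary_apply, map_sum]
  rw [← sum_product']
  refine sum_involution (fun p _ => p.swap) ?_ ?_ (by simp) (by simp)
  · rintro ⟨v, w⟩ -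
    obtain rfl | h := eq_or_ne v w
    · simp [contract_contract_self]
    · simp [contract_anticomm h]
  · rintro ⟨v, w⟩ - h
    contrapose! h
    obtain rfl : w = v := congrArg Prod.fst h
    exact contract_contract_self _ x

end Operators

section Homology

variable {V : Type*} {k : Type*} [CommRing k] {K L : SimpComplex V} {b : V} {c : ℤ}
  {x y z u : Finset V → k}

/-- The chains of `K` on faces of cardinality `c`, extended by zero to functions on all finite
vertex sets. The grading is by `ℤ`, so that degree shifts need no side conditions. -/
def chainSpace (k : Type*) [CommRing k] (K : SimpComplex V) (c : ℤ) : Submodule k (Finset V → k) :=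
  .pi {F | ¬(F ∈ K.faces ∧ (#F : ℤ) = c)} fun _ => ⊥

lemma mem_chainSpace : x ∈ chainSpace k K c ↔ ∀ F, x F ≠ 0 → F ∈ K.faces ∧ (#F : ℤ) = c := by
  simp only [chainSpace, Submodule.mem_pi, Set.mem_ofPred_eq, Submodule.mem_bot]
  exact forall_congr' fun F => not_imp_comm

lemma chainSpace_mono (h : K.faces ⊆ L.faces) (c : ℤ) : chainSpace k K c ≤ chainSpace k L c :=
  fun _ hx => mem_chainSpace.2 fun F hF => (mem_chainSpace.1 hx F hF).imp_left (h ·)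

lemma chainSpace_eq_bot (h : ∀ F ∈ K.faces, (#F : ℤ) ≠ c) : chainSpace k K c = ⊥ := by
  refine (Submodule.eq_bot_iff _).2 fun x hx => funext fun F => ?_
  by_contra hF
  obtain ⟨hFK, hFc⟩ := mem_chainSpace.1 hx F hF
  exact h F hFK hFc

variable [LinearOrder V]

lemma wedge_mem_chainSpace (h : ∀ F ∈ L.faces, (#F : ℤ) = c → insert b F ∈ K.faces)
    (hx : x ∈ chainSpace k L c) : wedge k b x ∈ chainSpace k K (c + 1) := by
  refine mem_chainSpace.2 fun F hF => ?_
  rw [wedge_apply] at hF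
  split_ifs at hF with hb
  · obtain ⟨hFL, hcard⟩ := mem_chainSpace.1 hx _ (right_ne_zero_of_mul hF)
    refine ⟨by simpa only [insert_erase hb] using h _ hFL hcard, ?_⟩
    rw [← hcard, ← card_erase_add_one hb, Nat.cast_add_one]
  · exact absurd rfl hF

/-- The link of the vertex `b`. -/
def link (K : SimpComplex V) (b : V) : SimpComplex V where
  faces := {F | b ∉ F ∧ insert b F ∈ K.faces}
  down_closed _ hF _ hG :=
    ⟨fun hb => hF.1 (hG hb), K.down_closed _ hF.2 _ (insert_subset_insert b hG)⟩

lemma wedge_mem_chainSpace_of_mem_link (hu : u ∈ chainSpace k (K.link b) c) :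
    wedge k b u ∈ chainSpace k K (c + 1) :=
  wedge_mem_chainSpace (L := K.link b) (fun _ hF _ => hF.2) hu

lemma contract_mem_chainSpace_link (hx : x ∈ chainSpace k K (c + 1)) :
    contract k b x ∈ chainSpace k (K.link b) c := by
  refine mem_chainSpace.2 fun F hF => ?_
  rw [contract_apply] at hF
  split_ifs at hF with hb
  · exact absurd rfl hF
  · obtain ⟨hFK, hcard⟩ := mem_chainSpace.1 hx _ (right_ne_zero_of_mul hF)
    rw [card_insert_of_notMem hb, Nat.cast_add_one, add_left_inj] at hcard
    exact ⟨⟨hb, hFK⟩, hcard⟩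

lemma contract_wedge_of_mem_chainSpace_link (hu : u ∈ chainSpace k (K.link b) c) :
    contract k b (wedge k b u) = u := by
  have hu0 : contract k b u = 0 :=
    contract_eq_zero_iff.2 fun F hb => by_contra fun hF => (mem_chainSpace.1 hu F hF).1.1 hb
  simpa only [hu0, map_zero, add_zero] using contract_wedge_add_wedge_contract b u

variable [Fintype V]

lemma mem_faces_induced_compl_singleton {F : Finset V} :
    F ∈ (K.induced {b}ᶜ).faces ↔ F ∈ K.faces ∧ b ∉ F :=
  and_congr_right fun _ => subset_compl_singleton

lemma faces_link_subset_faces_induced : (K.link b).faces ⊆ (K.induced {b}ᶜ).faces :=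
  fun F hF => mem_faces_induced_compl_singleton.2 ⟨K.down_closed _ hF.2 _ (subset_insert b F), hF.1⟩

lemma mem_chainSpace_induced_compl_singleton :
    x ∈ chainSpace k (K.induced {b}ᶜ) c ↔ x ∈ chainSpace k K c ∧ contract k b x = 0 := by
  simp only [mem_chainSpace, mem_faces_induced_compl_singleton, contract_eq_zero_iff]
  grind

/-- The cycles of `K` on faces of cardinality `c`. -/
def cycleSpace (k : Type*) [CommRing k] (K : SimpComplex V) (c : ℤ) : Submodule k (Finset V → k) :=
  chainSpace k K c ⊓ LinearMap.ker totalBoundary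

/-- The boundaries of `K` on faces of cardinality `c`. -/
def boundarySpace (k : Type*) [CommRing k] (K : SimpComplex V) (c : ℤ) :
    Submodule k (Finset V → k) :=
  (chainSpace k K (c + 1)).map totalBoundary

/-- The dimension of the reduced homology of `K` in homological degree `c - 1`, the degree of chains
on faces of cardinality `c`. -/
noncomputable def homologyDim (k : Type*) [CommRing k] (K : SimpComplex V) (c : ℤ) : ℕ :=
  Module.finrank k (cycleSpace k K c ⧸ (boundarySpace k K c).submoduleOf (cycleSpace k K c))

/-- All reduced homology of `K` with coefficients in `k` vanishes, including degree `-1`. -/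
def Acyclic (k : Type*) [CommRing k] (K : SimpComplex V) : Prop :=
  ∀ c, cycleSpace k K c ≤ boundarySpace k K c

lemma mem_cycleSpace : z ∈ cycleSpace k K c ↔ z ∈ chainSpace k K c ∧ totalBoundary z = 0 :=
  Iff.rfl

lemma totalBoundary_mem_boundarySpace (hx : x ∈ chainSpace k K (c + 1)) :
    totalBoundary x ∈ boundarySpace k K c :=
  Submodule.mem_map_of_mem hx

lemma boundarySpace_mono (h : K.faces ⊆ L.faces) (c : ℤ) :
    boundarySpace k K c ≤ boundarySpace k L c :=
  Submodule.map_mono (chainSpace_mono h _)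

section Nontrivial

variable [Nontrivial k]

lemma homologyDim_eq_zero (h : cycleSpace k K c ≤ boundarySpace k K c) :
    homologyDim k K c = 0 := by
  rw [homologyDim, Submodule.submoduleOf_eq_top.2 h]
  exact Module.finrank_zero_of_subsingleton

lemma Acyclic.homologyDim_eq_zero (h : Acyclic k K) (c : ℤ) : homologyDim k K c = 0 :=
  SimpComplex.homologyDim_eq_zero (h c)

end Nontrivial

lemma cycleSpace_le_boundarySpace_of_insert_mem
    (h : ∀ F ∈ K.faces, (#F : ℤ) = c → insert b F ∈ K.faces) :
    cycleSpace k K c ≤ boundarySpace k K c := by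
  rintro z ⟨hz, hz0 : totalBoundary z = 0⟩
  refine ⟨wedge k b z, wedge_mem_chainSpace h hz, ?_⟩
  rw [totalBoundary_wedge, hz0, map_zero, sub_zero]

lemma acyclic_of_insert_mem (h : ∀ F ∈ K.faces, insert b F ∈ K.faces) : Acyclic k K :=
  fun _ => cycleSpace_le_boundarySpace_of_insert_mem fun F hF _ => h F hF

lemma homologyDim_eq_zero_of_nonpos [Nontrivial k] (hb : {b} ∈ K.faces) (hc : c ≤ 0) :
    homologyDim k K c = 0 := by
  refine homologyDim_eq_zero (cycleSpace_le_boundarySpace_of_insert_mem (b := b) fun F _ hF => ?_)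
  obtain rfl : F = ∅ := card_eq_zero.1 (by omega)
  simpa using hb

lemma cycleSpace_zero_of_faces_eq_singleton_empty (hK : K.faces = {∅}) :
    cycleSpace k K 0 = LinearMap.range (LinearMap.single k (fun _ : Finset V => k) ∅) := by
  ext x
  simp only [mem_cycleSpace, mem_chainSpace, hK, Set.mem_singleton_iff, LinearMap.mem_range]
  constructor
  · rintro ⟨hx, -⟩
    refine ⟨x ∅, funext fun F => ?_⟩
    obtain rfl | hF := eq_or_ne F ∅
    · simp
    · rw [LinearMap.single_apply, Pi.single_eq_of_ne hF,
        not_imp_comm.1 (hx F) fun h => hF h.1]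
  · rintro ⟨a, rfl⟩
    refine ⟨fun F hF => ?_, ?_⟩
    · obtain rfl : F = ∅ := by_contra fun h => hF (by simp [h])
      simp
    · rw [totalBoundary_apply]
      exact sum_eq_zero fun v _ =>
        contract_eq_zero_iff.2 fun F hv => by simp [ne_empty_of_mem hv]

lemma homologyDim_of_faces_eq_singleton_empty [Nontrivial k] (hK : K.faces = {∅}) :
    homologyDim k K c = if c = 0 then 1 else 0 := by
  have hbot {d : ℤ} (hd : d ≠ 0) : chainSpace k K d = ⊥ :=
    chainSpace_eq_bot fun F hF => by
      rw [hK] at hF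
      simpa [Set.mem_singleton_iff.1 hF] using hd.symm
  split_ifs with hc
  · subst hc
    have hB : (boundarySpace k K 0).submoduleOf (cycleSpace k K 0) = ⊥ := by
      rw [boundarySpace, hbot (by norm_num), Submodule.map_bot, Submodule.submoduleOf,
        Submodule.comap_bot, Submodule.ker_subtype]
    rw [homologyDim, (Submodule.quotEquivOfEqBot _ hB).finrank_eq,
      cycleSpace_zero_of_faces_eq_singleton_empty hK,
      LinearMap.finrank_range_of_inj (Pi.single_injective (M := fun _ : Finset V => k) ∅),
      Module.finrank_self]
  · exact homologyDim_eq_zero (inf_le_left.trans ((hbot hc).trans_le bot_le))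

lemma add_totalBoundary_wedge_mem_induced (hx : x ∈ chainSpace k K (c + 1))
    (hu : u ∈ chainSpace k (K.link b) (c + 1)) (hux : totalBoundary u = contract k b x) :
    x + totalBoundary (wedge k b u) ∈ chainSpace k (K.induced {b}ᶜ) (c + 1) := by
  refine mem_chainSpace_induced_compl_singleton.2 ⟨add_mem hx ?_, ?_⟩
  · rw [totalBoundary_wedge, hux]
    exact sub_mem (mem_chainSpace_induced_compl_singleton.1
        (chainSpace_mono faces_link_subset_faces_induced _ hu)).1
      (wedge_mem_chainSpace_of_mem_link (contract_mem_chainSpace_link hx))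
  · have h := totalBoundary_contract b (wedge k b u)
    rw [contract_wedge_of_mem_chainSpace_link hu, hux] at h
    rw [map_add, h, neg_add_cancel]

lemma Acyclic.exists_add_totalBoundary_mem_induced (hL : Acyclic k (K.link b))
    (hx : x ∈ chainSpace k K (c + 1)) (hx0 : contract k b (totalBoundary x) = 0) :
    ∃ w ∈ chainSpace k K (c + 1 + 1),
      x + totalBoundary w ∈ chainSpace k (K.induced {b}ᶜ) (c + 1) := by
  obtain ⟨u, hu, hux⟩ := hL c <| mem_cycleSpace.2 ⟨contract_mem_chainSpace_link hx, by
    rw [totalBoundary_contract, hx0, neg_zero]⟩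
  exact ⟨wedge k b u, wedge_mem_chainSpace_of_mem_link hu,
    add_totalBoundary_wedge_mem_induced hx hu hux⟩

lemma Acyclic.homologyDim_induced_compl_singleton (hL : Acyclic k (K.link b)) (c : ℤ) :
    homologyDim k (K.induced {b}ᶜ) c = homologyDim k K c := by
  have hle : (K.induced {b}ᶜ).faces ⊆ K.faces := fun F hF => hF.1
  refine finrank_quotient_submoduleOf_eq LinearMap.id ?_ (fun x hx => ⟨?_, ?_⟩) fun z hz => ?_
  · exact fun x hx => ⟨chainSpace_mono hle c hx.1, hx.2⟩
  · rintro ⟨y, hy, rfl : totalBoundary y = x⟩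
    obtain ⟨w, -, hyw⟩ := hL.exists_add_totalBoundary_mem_induced hy
      (mem_chainSpace_induced_compl_singleton.1 hx.1).2
    simpa only [map_add, totalBoundary_totalBoundary, add_zero] using
      totalBoundary_mem_boundarySpace hyw
  · exact fun h => boundarySpace_mono hle c h
  · obtain ⟨c, rfl⟩ : ∃ d, c = d + 1 := ⟨c - 1, by ring⟩
    obtain ⟨hz, hz0⟩ := mem_cycleSpace.1 hz
    obtain ⟨w, hw, hzw⟩ := hL.exists_add_totalBoundary_mem_induced hz (by rw [hz0, map_zero])
    refine ⟨z + totalBoundary w, mem_cycleSpace.2 ⟨hzw, ?_⟩, -w, neg_mem hw, ?_⟩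
    · rw [map_add, totalBoundary_totalBoundary, hz0, add_zero]
    · rw [map_neg, LinearMap.id_apply, sub_add_cancel_left]

lemma Acyclic.homologyDim_link (hD : Acyclic k (K.induced {b}ᶜ)) (c : ℤ) :
    homologyDim k K (c + 1) = homologyDim k (K.link b) c := by
  refine finrank_quotient_submoduleOf_eq (contract k b) (fun x hx => ?_) (fun x hx => ⟨?_, ?_⟩)
    fun z hz => ?_
  · obtain ⟨hx, hx0⟩ := mem_cycleSpace.1 hx
    exact ⟨contract_mem_chainSpace_link hx, by simp [totalBoundary_contract, hx0]⟩
  · obtain ⟨hx, hx0⟩ := mem_cycleSpace.1 hx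
    rintro ⟨u, hu, hux⟩
    have hcycle : x + totalBoundary (wedge k b u) ∈ cycleSpace k (K.induced {b}ᶜ) (c + 1) :=
      ⟨add_totalBoundary_wedge_mem_induced hx hu hux, by simp [totalBoundary_totalBoundary, hx0]⟩
    have hmem := boundarySpace_mono (K := K.induced {b}ᶜ) (L := K) (fun _ hF => hF.1) _
      (hD _ hcycle)
    exact (add_mem_cancel_right (totalBoundary_mem_boundarySpace
      (wedge_mem_chainSpace_of_mem_link hu))).1 hmem
  · rintro ⟨y, hy, rfl⟩
    rw [← neg_neg (contract k b _), ← totalBoundary_contract]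
    exact neg_mem (totalBoundary_mem_boundarySpace (contract_mem_chainSpace_link hy))
  · obtain ⟨hz, hz0⟩ := mem_cycleSpace.1 hz
    obtain ⟨w, hw, hwz⟩ := hD c ⟨chainSpace_mono faces_link_subset_faces_induced _ hz, hz0⟩
    obtain ⟨hwK, hw0⟩ := mem_chainSpace_induced_compl_singleton.1 hw
    refine ⟨wedge k b z - w, ⟨sub_mem (wedge_mem_chainSpace_of_mem_link hz) hwK, ?_⟩, ?_⟩
    · simp [totalBoundary_wedge, hz0, hwz]
    · rw [map_sub, hw0, contract_wedge_of_mem_chainSpace_link hz, sub_zero, sub_self]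
      exact zero_mem _

end Homology

section Comparison

variable {V : Type*} {k : Type*} [Field k] {K : SimpComplex V} {c : ℕ}

/-- A chain of `K`, extended by zero to a function on all finite vertex sets. -/
noncomputable def extendByZero (k : Type*) [Field k] (K : SimpComplex V) (c : ℕ) :
    Chains k K c →ₗ[k] (Finset V → k) :=
  Function.ExtendByZero.linearMap k (Subtype.val : Face K c → Finset V)

lemma extendByZero_apply (x : Chains k K c) (F : Face K c) : extendByZero k K c x F.1 = x F :=
  Subtype.val_injective.extend_apply x 0 F

lemma extendByZero_apply_of_not (x : Chains k K c) {F : Finset V}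
    (hF : ¬(F ∈ K.faces ∧ #F = c)) : extendByZero k K c x F = 0 :=
  Function.extend_apply' _ _ _ fun ⟨G, hG⟩ => hF (hG ▸ G.2)

lemma extendByZero_injective : Function.Injective (extendByZero k K c) := fun x y h =>
  funext fun F => by rw [← extendByZero_apply x F, h, extendByZero_apply]

lemma range_extendByZero : LinearMap.range (extendByZero k K c) = chainSpace k K c := by
  ext x
  rw [mem_chainSpace]
  constructor
  · rintro ⟨x, rfl⟩ F hF
    have hFK : F ∈ K.faces ∧ #F = c := by_contra fun h => hF (extendByZero_apply_of_not x h)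
    exact_mod_cast hFK
  · refine fun hx => ⟨fun F => x F.1, funext fun F => ?_⟩
    by_cases hF : F ∈ K.faces ∧ #F = c
    · exact extendByZero_apply _ ⟨F, hF⟩
    · rw [extendByZero_apply_of_not _ hF]
      by_contra h
      exact hF (by exact_mod_cast hx F (Ne.symm h))

variable [LinearOrder V] [Fintype V]

lemma boundary_apply (x : Chains k K (c + 1)) (F : Face K c) :
    boundary k K c x F = ∑ v ∈ univ \ F.1, contract k v (extendByZero k K (c + 1) x) F.1 := by
  rw [← sum_attach]
  refine sum_congr rfl fun v _ => ?_
  have hv : v.1 ∉ F.1 := (mem_sdiff.1 v.2).2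
  rw [contract_apply, if_neg hv]
  split_ifs with hK
  · rw [extendByZero_apply x ⟨insert v.1 F.1, hK, by rw [card_insert_of_notMem hv, F.2.2]⟩]
    rfl
  · rw [extendByZero_apply_of_not x fun h => hK h.1, mul_zero]

lemma totalBoundary_extendByZero (x : Chains k K (c + 1)) :
    totalBoundary (extendByZero k K (c + 1) x) = extendByZero k K c (boundary k K c x) := by
  funext F
  rw [totalBoundary_apply, Finset.sum_apply]
  by_cases hF : F ∈ K.faces ∧ #F = c
  · obtain ⟨F, rfl⟩ : ∃ F' : Face K c, F'.1 = F := ⟨⟨F, hF⟩, rfl⟩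
    rw [extendByZero_apply, boundary_apply]
    refine (sum_subset (subset_univ _) fun v _ hv => ?_).symm
    rw [contract_apply, if_pos (by simpa using hv)]
  · rw [extendByZero_apply_of_not _ hF]
    refine sum_eq_zero fun v _ => ?_
    rw [contract_apply]
    split_ifs with hv
    · rfl
    · rw [extendByZero_apply_of_not, mul_zero]
      rintro ⟨hK, hcard⟩
      rw [card_insert_of_notMem hv, add_left_inj] at hcard
      exact hF ⟨K.down_closed _ hK _ (subset_insert v F), hcard⟩

lemma reducedBetti_eq_homologyDim (k : Type*) [Field k] (K : SimpComplex V) (j : ℕ) :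
    reducedBetti k K j = homologyDim k K (j + 1) := by
  have hmem (c : ℕ) (x : Chains k K c) : extendByZero k K c x ∈ chainSpace k K c := by
    rw [← range_extendByZero]
    exact LinearMap.mem_range_self _ x
  refine finrank_quotient_submoduleOf_eq (extendByZero k K (j + 1)) (fun x hx => ?_)
    (fun x _ => ⟨?_, ?_⟩) fun z hz => ?_
  · refine mem_cycleSpace.2 ⟨by exact_mod_cast hmem (j + 1) x, ?_⟩
    rw [totalBoundary_extendByZero, LinearMap.mem_ker.1 hx, map_zero]
  · rintro ⟨y, hy, hyx⟩
    obtain ⟨y, rfl⟩ := range_extendByZero.ge (by exact_mod_cast hy :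
      y ∈ chainSpace k K (j + 1 + 1 : ℕ))
    rw [totalBoundary_extendByZero] at hyx
    exact ⟨y, extendByZero_injective hyx⟩
  · rintro ⟨y, rfl⟩
    rw [← totalBoundary_extendByZero]
    exact totalBoundary_mem_boundarySpace (by exact_mod_cast hmem (j + 1 + 1) y)
  · obtain ⟨hz, hz0⟩ := mem_cycleSpace.1 hz
    obtain ⟨x, rfl⟩ := range_extendByZero.ge (by exact_mod_cast hz :
      z ∈ chainSpace k K (j + 1 : ℕ))
    rw [totalBoundary_extendByZero] at hz0
    exact ⟨x, LinearMap.mem_ker.2 (extendByZero_injective (by rw [hz0, map_zero])), by simp⟩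

lemma bettiFine_eq_homologyDim (k : Type*) [Field k] {W : Finset V} {v : V} (hv : v ∈ W)
    (hvK : {v} ∈ K.faces) (i : ℕ) :
    bettiFine k K i W = homologyDim k (K.induced W) (#W - i - 1) := by
  rw [bettiFine]
  split_ifs with hi
  · rw [reducedBetti_eq_homologyDim]
    congr 1
    omega
  · have hvW : {v} ∈ (K.induced W).faces := ⟨hvK, singleton_subset_iff.2 hv⟩
    exact (homologyDim_eq_zero_of_nonpos hvW (by omega)).symm

end Comparison

attribute [ext] SimpComplex

section Graph

variable {V : Type*} {G : SimpleGraph V} {W S : Finset V} {u v : V} {k : Type*} [CommRing k]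

/-- The independence complex of the subgraph of `G` induced on `W`: its faces are the independent
sets of vertices in `W`. -/
def independenceComplex (G : SimpleGraph V) (W : Finset V) : SimpComplex V where
  faces := {F | F ⊆ W ∧ G.IsIndepSet F}
  down_closed _ hF _ hG := ⟨hG.trans hF.1, hF.2.mono (coe_subset.2 hG)⟩

lemma mem_faces_independenceComplex {F : Finset V} :
    F ∈ (independenceComplex G W).faces ↔ F ⊆ W ∧ G.IsIndepSet F :=
  Iff.rfl

lemma faces_independenceComplex_empty : (independenceComplex G ∅).faces = {∅} := by
  ext F
  simp +contextual [mem_faces_independenceComplex, subset_empty]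

variable [LinearOrder V]

lemma link_independenceComplex [DecidableRel G.Adj] (hv : v ∈ W) :
    (independenceComplex G W).link v = independenceComplex G {w ∈ W | w ≠ v ∧ ¬G.Adj v w} := by
  ext F
  have hindep (hvF : v ∉ F) :
      G.IsIndepSet ↑(insert v F) ↔ G.IsIndepSet F ∧ ∀ w ∈ F, ¬G.Adj v w := by
    rw [coe_insert, SimpleGraph.IsIndepSet, Set.pairwise_insert_of_notMem hvF]
    simp only [G.adj_comm _ v, and_self, mem_coe]
  have hsub : F ⊆ {w ∈ W | w ≠ v ∧ ¬G.Adj v w} ↔ F ⊆ W ∧ v ∉ F ∧ ∀ w ∈ F, ¬G.Adj v w := by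
    simp only [subset_iff, mem_filter]
    grind
  simp only [link, Set.mem_ofPred_eq, mem_faces_independenceComplex, insert_subset_iff, hv,
    true_and, hsub]
  constructor
  · rintro ⟨hvF, hFW, hF⟩
    exact ⟨⟨hFW, hvF, ((hindep hvF).1 hF).2⟩, ((hindep hvF).1 hF).1⟩
  · rintro ⟨⟨hFW, hvF, hadj⟩, hF⟩
    exact ⟨hvF, hFW, (hindep hvF).2 ⟨hF, hadj⟩⟩

variable [Fintype V]

lemma induced_compl_singleton_independenceComplex (v : V) :
    (independenceComplex G W).induced {v}ᶜ = independenceComplex G (W.erase v) := by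
  ext F
  rw [mem_faces_induced_compl_singleton, mem_faces_independenceComplex,
    mem_faces_independenceComplex, subset_erase]
  tauto

/-- An isolated vertex is an apex. -/
lemma acyclic_independenceComplex (hv : v ∈ W) (h : ∀ w ∈ W, ¬G.Adj v w) :
    Acyclic k (independenceComplex G W) := by
  refine acyclic_of_insert_mem (b := v) fun F hF => ⟨insert_subset hv hF.1, ?_⟩
  rw [coe_insert]
  exact hF.2.insert fun w hw _ => ⟨h w (hF.1 hw), fun hwv => h w (hF.1 hw) hwv.symm⟩

/-- Folding: the link of a dominating vertex `v` is a cone with apex `u`. -/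
lemma homologyDim_independenceComplex_erase (hu : u ∈ W) (huv : u ≠ v)
    (h : ∀ w ∈ W, G.Adj u w → G.Adj v w) (c : ℤ) :
    homologyDim k (independenceComplex G (W.erase v)) c =
      homologyDim k (independenceComplex G W) c := by
  classical
  by_cases hv : v ∈ W
  · rw [← induced_compl_singleton_independenceComplex]
    refine Acyclic.homologyDim_induced_compl_singleton ?_ c
    rw [link_independenceComplex hv]
    have huv' : ¬G.Adj v u := fun hvu => G.irrefl (h v hv hvu.symm)
    refine acyclic_independenceComplex (mem_filter.2 ⟨hu, huv, huv'⟩) fun w hw huw => ?_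
    exact (mem_filter.1 hw).2.2 (h w (mem_filter.1 hw).1 huw)
  · rw [erase_eq_of_notMem hv]

lemma homologyDim_independenceComplex_of_dominated (hS : S ⊆ W)
    (h : ∀ v ∈ W \ S, ∃ u ∈ S, ∀ w ∈ W, G.Adj u w → G.Adj v w) (c : ℤ) :
    homologyDim k (independenceComplex G S) c = homologyDim k (independenceComplex G W) c := by
  suffices hdelete : ∀ D ⊆ W \ S, homologyDim k (independenceComplex G (W \ D)) c =
      homologyDim k (independenceComplex G W) c by
    simpa only [Finset.sdiff_sdiff_eq_self hS] using hdelete (W \ S) Subset.rfl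
  intro D
  induction D using Finset.induction_on with
  | empty => simp
  | insert v D _ ih =>
    intro hD
    obtain ⟨hv, hD⟩ := insert_subset_iff.1 hD
    obtain ⟨u, hu, huv⟩ := h v hv
    have huD : u ∉ D := fun h => (mem_sdiff.1 (hD h)).2 hu
    have hne : u ≠ v := fun h => (mem_sdiff.1 hv).2 (h ▸ hu)
    rw [sdiff_insert, homologyDim_independenceComplex_erase (mem_sdiff.2 ⟨hS hu, huD⟩) hne
      (fun w hw => huv w (mem_sdiff.1 hw).1), ih hD]

/-- Deleting the neighbor `v` of the leaf `u` leaves a cone with apex `u`. -/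
lemma homologyDim_independenceComplex_leaf [DecidableRel G.Adj] (hu : u ∈ W) (hv : v ∈ W)
    (huv : u ≠ v) (h : ∀ w ∈ W, G.Adj u w → w = v) (c : ℤ) :
    homologyDim k (independenceComplex G W) (c + 1) =
      homologyDim k (independenceComplex G {w ∈ W | w ≠ v ∧ ¬G.Adj v w}) c := by
  rw [← link_independenceComplex hv]
  refine Acyclic.homologyDim_link ?_ c
  rw [induced_compl_singleton_independenceComplex]
  exact acyclic_independenceComplex (mem_erase.2 ⟨huv, hu⟩) fun w hw huw =>
    (mem_erase.1 hw).1 (h w (mem_of_mem_erase hw) huw)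

end Graph

end SimpComplex

section Bipartite

variable {n m : ℕ} {E : Finset (Fin n × Fin m)} {X X₀ : Finset (Fin n)} {Y Y₀ : Finset (Fin m)}
  {x x' : Fin n} {y y' : Fin m} {k : Type*} [CommRing k] {c : ℤ}

lemma mem_nbr : y ∈ nbr E x ↔ (x, y) ∈ E := by
  simp [nbr]

lemma xVert_injective : Function.Injective (xVert : Fin n → Fin (n + m)) :=
  Fin.castAdd_injective n m

lemma yVert_injective : Function.Injective (yVert : Fin m → Fin (n + m)) :=
  Fin.natAdd_injective m n

lemma xVert_ne_yVert : (xVert x : Fin (n + m)) ≠ yVert y :=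
  Fin.ne_of_val_ne (x.isLt.trans_le (Nat.le_add_right n y)).ne

lemma xVert_mem_vset : xVert x ∈ vset X Y ↔ x ∈ X := by
  simp [vset, xVert_injective.eq_iff, xVert_ne_yVert.symm]

lemma yVert_mem_vset : yVert y ∈ vset X Y ↔ y ∈ Y := by
  simp [vset, yVert_injective.eq_iff, xVert_ne_yVert]

lemma vset_subset_vset (hX : X₀ ⊆ X) (hY : Y₀ ⊆ Y) : vset X₀ Y₀ ⊆ vset X Y :=
  union_subset_union (image_subset_image hX) (image_subset_image hY)

lemma forall_vert {P : Fin (n + m) → Prop} :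
    (∀ v, P v) ↔ (∀ x, P (xVert x)) ∧ ∀ y, P (yVert y) :=
  Fin.forall_fin_add P

lemma card_vset (X : Finset (Fin n)) (Y : Finset (Fin m)) : #(vset X Y) = #X + #Y := by
  rw [vset, card_union_of_disjoint, card_image_of_injective _ xVert_injective,
    card_image_of_injective _ yVert_injective]
  simp [disjoint_left, xVert_ne_yVert.symm]

/-- The bipartite graph with edge set `E`, as a simple graph on `X ⊔ Y`. -/
def bipartiteGraph (E : Finset (Fin n × Fin m)) : SimpleGraph (Fin (n + m)) :=
  .fromRel fun v w => ∃ p ∈ E, v = xVert p.1 ∧ w = yVert p.2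

lemma bipartiteGraph_adj_xVert_yVert :
    (bipartiteGraph E).Adj (xVert x) (yVert y) ↔ y ∈ nbr E x := by
  simp [bipartiteGraph, xVert_ne_yVert, xVert_ne_yVert.symm, xVert_injective.eq_iff,
    yVert_injective.eq_iff, mem_nbr]

lemma not_bipartiteGraph_adj_xVert_xVert :
    ¬(bipartiteGraph E).Adj (xVert x) (xVert x') := by
  simp [bipartiteGraph, xVert_ne_yVert]

lemma not_bipartiteGraph_adj_yVert_yVert :
    ¬(bipartiteGraph E).Adj (yVert y) (yVert y') := by
  simp [bipartiteGraph, xVert_ne_yVert.symm]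

lemma bipartiteGraph_adj_yVert_xVert :
    (bipartiteGraph E).Adj (yVert y) (xVert x) ↔ y ∈ nbr E x := by
  rw [SimpleGraph.adj_comm, bipartiteGraph_adj_xVert_yVert]

/-- The independence complex of the subgraph of the bipartite graph `E` induced on `X ⊔ Y`. -/
abbrev indepComplexOn (E : Finset (Fin n × Fin m)) (X : Finset (Fin n)) (Y : Finset (Fin m)) :
    SimpComplex (Fin (n + m)) :=
  independenceComplex (bipartiteGraph E) (vset X Y)

lemma mem_faces_indepComplex {F : Finset (Fin (n + m))} :
    F ∈ (indepComplex E).faces ↔ (bipartiteGraph E).IsIndepSet F := by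
  refine ⟨fun h => ?_, fun h p hp hpF => ?_⟩
  · refine forall_vert.2 ⟨fun x hx => forall_vert.2 ⟨fun x' _ _ => ?_, fun y hy _ hxy => ?_⟩,
      fun y hy => forall_vert.2 ⟨fun x hx _ hxy => ?_, fun y' _ _ => ?_⟩⟩
    · exact not_bipartiteGraph_adj_xVert_xVert
    · exact h _ (mem_nbr.1 (bipartiteGraph_adj_xVert_yVert.1 hxy)) ⟨hx, hy⟩
    · exact h _ (mem_nbr.1 (bipartiteGraph_adj_yVert_xVert.1 hxy)) ⟨hx, hy⟩
    · exact not_bipartiteGraph_adj_yVert_yVert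
  · exact h hpF.1 hpF.2 xVert_ne_yVert (bipartiteGraph_adj_xVert_yVert.2 (mem_nbr.2 hp))

lemma induced_indepComplex (E : Finset (Fin n × Fin m)) (X : Finset (Fin n))
    (Y : Finset (Fin m)) : (indepComplex E).induced (vset X Y) = indepComplexOn E X Y := by
  ext F
  exact (and_congr_left' mem_faces_indepComplex).trans and_comm

lemma bettiFine_indepComplex (k : Type*) [Field k] (h : (vset X Y).Nonempty) (i : ℕ) :
    bettiFine k (indepComplex E) i (vset X Y) =
      homologyDim k (indepComplexOn E X Y) (#X + #Y - i - 1) := by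
  obtain ⟨v, hv⟩ := h
  have hface : {v} ∈ (indepComplex E).faces :=
    mem_faces_indepComplex.2 (by simp [SimpleGraph.IsIndepSet])
  rw [← induced_indepComplex, bettiFine_eq_homologyDim k hv hface, card_vset, Nat.cast_add]

lemma acyclic_indepComplexOn_of_disjoint (hx : x ∈ X) (h : Disjoint (nbr E x) Y) :
    Acyclic k (indepComplexOn E X Y) := by
  refine acyclic_independenceComplex (xVert_mem_vset.2 hx) <| forall_vert.2 ⟨?_, ?_⟩
  · exact fun _ _ => not_bipartiteGraph_adj_xVert_xVert
  · intro y hy hxy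
    exact disjoint_left.1 h (bipartiteGraph_adj_xVert_yVert.1 hxy) (yVert_mem_vset.1 hy)

lemma acyclic_indepComplexOn_of_notMem_nbr (hy : y ∈ Y) (h : ∀ x ∈ X, y ∉ nbr E x) :
    Acyclic k (indepComplexOn E X Y) := by
  refine acyclic_independenceComplex (yVert_mem_vset.2 hy) <| forall_vert.2 ⟨?_, ?_⟩
  · exact fun x hx hxy => h x (xVert_mem_vset.1 hx) (bipartiteGraph_adj_yVert_xVert.1 hxy)
  · exact fun _ _ => not_bipartiteGraph_adj_yVert_yVert

lemma homologyDim_indepComplexOn_of_dominated_left (hX : X₀ ⊆ X)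
    (h : ∀ x ∈ X \ X₀, ∃ x₀ ∈ X₀, nbr E x₀ ∩ Y ⊆ nbr E x) (c : ℤ) :
    homologyDim k (indepComplexOn E X₀ Y) c = homologyDim k (indepComplexOn E X Y) c := by
  refine homologyDim_independenceComplex_of_dominated
    (vset_subset_vset hX Subset.rfl) (forall_vert.2 ⟨?_, ?_⟩) c
  · intro x hx
    rw [mem_sdiff, xVert_mem_vset, xVert_mem_vset, ← mem_sdiff] at hx
    obtain ⟨x₀, hx₀, hsub⟩ := h x hx
    refine ⟨xVert x₀, xVert_mem_vset.2 hx₀, forall_vert.2 ⟨?_, fun y hy hxy => ?_⟩⟩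
    · exact fun _ _ hadj => absurd hadj not_bipartiteGraph_adj_xVert_xVert
    · rw [bipartiteGraph_adj_xVert_yVert] at hxy ⊢
      exact hsub (mem_inter.2 ⟨hxy, yVert_mem_vset.1 hy⟩)
  · intro y hy
    rw [mem_sdiff, yVert_mem_vset, yVert_mem_vset] at hy
    exact absurd hy.1 hy.2

lemma homologyDim_indepComplexOn_of_dominated_right (hY : Y₀ ⊆ Y)
    (h : ∀ y ∈ Y \ Y₀, ∃ y₀ ∈ Y₀, ∀ x ∈ X, y₀ ∈ nbr E x → y ∈ nbr E x) (c : ℤ) :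
    homologyDim k (indepComplexOn E X Y₀) c = homologyDim k (indepComplexOn E X Y) c := by
  refine homologyDim_independenceComplex_of_dominated
    (vset_subset_vset Subset.rfl hY) (forall_vert.2 ⟨?_, ?_⟩) c
  · intro x hx
    rw [mem_sdiff, xVert_mem_vset, xVert_mem_vset] at hx
    exact absurd hx.1 hx.2
  · intro y hy
    rw [mem_sdiff, yVert_mem_vset, yVert_mem_vset, ← mem_sdiff] at hy
    obtain ⟨y₀, hy₀, hsub⟩ := h y hy
    refine ⟨yVert y₀, yVert_mem_vset.2 hy₀, forall_vert.2 ⟨fun x hx hxy => ?_, ?_⟩⟩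
    · rw [bipartiteGraph_adj_yVert_xVert] at hxy ⊢
      exact hsub x (xVert_mem_vset.1 hx) hxy
    · exact fun _ _ hadj => absurd hadj not_bipartiteGraph_adj_yVert_yVert

lemma homologyDim_indepComplexOn_leaf (hx : x ∈ X) (hxy : nbr E x ∩ Y = {y}) (c : ℤ) :
    homologyDim k (indepComplexOn E X Y) (c + 1) =
      homologyDim k (indepComplexOn E {x ∈ X | y ∉ nbr E x} (Y.erase y)) c := by
  classical
  obtain ⟨-, hy⟩ := mem_inter.1 (hxy.ge (mem_singleton_self y))
  rw [homologyDim_independenceComplex_leaf (xVert_mem_vset.2 hx) (yVert_mem_vset.2 hy)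
    xVert_ne_yVert]
  · congr 2
    refine Finset.ext <| forall_vert.2 ⟨fun z => ?_, fun z => ?_⟩
    · rw [mem_filter, xVert_mem_vset, xVert_mem_vset, mem_filter,
        bipartiteGraph_adj_yVert_xVert, and_iff_right xVert_ne_yVert]
    · rw [mem_filter, yVert_mem_vset, yVert_mem_vset, mem_erase, yVert_injective.ne_iff,
        and_iff_left not_bipartiteGraph_adj_yVert_yVert, and_comm]
  · refine forall_vert.2 ⟨?_, fun z hz hxz => ?_⟩
    · exact fun _ _ hadj => absurd hadj not_bipartiteGraph_adj_xVert_xVert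
    · rw [bipartiteGraph_adj_xVert_yVert] at hxz
      have hz' := hxy.le (mem_inter.2 ⟨hxz, yVert_mem_vset.1 hz⟩)
      rw [mem_singleton.1 hz']

end Bipartite

section Transversal

variable {n m : ℕ} {E : Finset (Fin n × Fin m)} {X : Finset (Fin n)} {Y Y' : Finset (Fin m)}
  {y y' : Fin m} {k : Type*} [CommRing k]

/-- `Y` is a transversal of the neighborhoods of the vertices in `X`: it meets each of them. The
minimal ones each contribute `1` to the Betti number `β_{|X|-1,X,•}`. -/
def IsTransversal (E : Finset (Fin n × Fin m)) (X : Finset (Fin n)) (Y : Finset (Fin m)) : Prop :=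
  ∀ x ∈ X, (nbr E x ∩ Y).Nonempty

lemma IsTransversal.mono (h : IsTransversal E X Y) (hY : Y ⊆ Y') : IsTransversal E X Y' :=
  fun x hx => (h x hx).mono (inter_subset_inter_left hY)

lemma minimal_isTransversal_iff : Minimal (IsTransversal E X) Y ↔
    IsTransversal E X Y ∧ ∀ y ∈ Y, ∃ x ∈ X, nbr E x ∩ Y = {y} := by
  rw [Finset.minimal_iff_forall_erase fun _ _ h hY => h.mono hY]
  refine and_congr_right fun hY => forall₂_congr fun y hy => ?_
  simp only [IsTransversal, not_forall, exists_prop]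
  refine exists_congr fun x => and_congr_right fun hx => ?_
  rw [not_nonempty_iff_eq_empty, inter_erase, erase_eq_empty_iff, or_iff_right (hY x hx).ne_empty]

lemma homologyDim_indepComplexOn_of_card_eq_one [Nontrivial k]
    (hX : ∀ x ∈ X, #(nbr E x ∩ Y) = 1) (hY : ∀ y ∈ Y, ∃ x ∈ X, y ∈ nbr E x) (c : ℤ) :
    homologyDim k (indepComplexOn E X Y) c = if c = #Y then 1 else 0 := by
  induction Y using Finset.induction_on generalizing X c with
  | empty =>
    obtain rfl : X = ∅ := eq_empty_of_forall_notMem fun x hx => by simpa using hX x hx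
    exact homologyDim_of_faces_eq_singleton_empty faces_independenceComplex_empty
  | insert y Y hy ih =>
    obtain ⟨x, hx, hxy⟩ := hY y (mem_insert_self y Y)
    have hinter {x : Fin n} (hx : x ∈ X) (hxy : y ∈ nbr E x) : nbr E x ∩ insert y Y = {y} :=
      (eq_of_subset_of_card_le (singleton_subset_iff.2 (mem_inter.2 ⟨hxy, mem_insert_self y Y⟩))
        (hX x hx).le).symm
    rw [← sub_add_cancel c 1, homologyDim_indepComplexOn_leaf hx (hinter hx hxy),
      erase_insert hy, ih, card_insert_of_notMem hy]
    · grind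
    · intro x hx
      rw [mem_filter] at hx
      rw [← hX x hx.1, inter_insert_of_notMem hx.2]
    · intro y' hy'
      obtain ⟨x', hx', hxy'⟩ := hY y' (mem_insert_of_mem hy')
      refine ⟨x', mem_filter.2 ⟨hx', fun h => ?_⟩, hxy'⟩
      have := (hinter hx' h).le (mem_inter.2 ⟨hxy', mem_insert_of_mem hy'⟩)
      exact hy (mem_singleton.1 this ▸ hy')

lemma homologyDim_indepComplexOn_of_minimal [Nontrivial k]
    (h : Minimal (IsTransversal E X) Y) (c : ℤ) :
    homologyDim k (indepComplexOn E X Y) c = if c = #Y then 1 else 0 := by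
  obtain ⟨hY, hprivate⟩ := minimal_isTransversal_iff.1 h
  rw [← homologyDim_indepComplexOn_of_dominated_left
    (filter_subset (fun x => #(nbr E x ∩ Y) = 1) X)]
  · refine homologyDim_indepComplexOn_of_card_eq_one (fun x hx => (mem_filter.1 hx).2) ?_ c
    intro y hy
    obtain ⟨x, hx, hxy⟩ := hprivate y hy
    exact ⟨x, mem_filter.2 ⟨hx, by rw [hxy, card_singleton]⟩,
      mem_of_mem_inter_left (hxy.ge (mem_singleton_self y))⟩
  · intro x hx
    obtain ⟨y, hy⟩ := hY x (mem_sdiff.1 hx).1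
    obtain ⟨hxy, hy⟩ := mem_inter.1 hy
    obtain ⟨x₀, hx₀, hx₀y⟩ := hprivate y hy
    exact ⟨x₀, mem_filter.2 ⟨hx₀, by rw [hx₀y, card_singleton]⟩,
      hx₀y.trans_subset (singleton_subset_iff.2 hxy)⟩

lemma minimal_isTransversal_singleton (hX : X.Nonempty) (h : ∀ x ∈ X, y ∈ nbr E x) :
    Minimal (IsTransversal E X) {y} := by
  have hinter {x : Fin n} (hx : x ∈ X) : nbr E x ∩ {y} = {y} :=
    inter_singleton_of_mem (h x hx)
  refine minimal_isTransversal_iff.2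
    ⟨fun x hx => by simp [hinter hx], fun z hz => ?_⟩
  obtain rfl := mem_singleton.1 hz
  exact hX.imp fun x hx => ⟨hx, hinter hx⟩

lemma minimal_isTransversal_pair (h : ∀ x ∈ X, y ∈ nbr E x ∨ y' ∈ nbr E x)
    (hy : ∃ x ∈ X, y ∉ nbr E x) (hy' : ∃ x ∈ X, y' ∉ nbr E x) :
    Minimal (IsTransversal E X) {y, y'} := by
  refine minimal_isTransversal_iff.2 ⟨fun x hx => ?_, ?_⟩
  · obtain hxy | hxy := h x hx
    · exact ⟨y, by simp [hxy]⟩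
    · exact ⟨y', by simp [hxy]⟩
  · obtain ⟨x₁, hx₁, h₁⟩ := hy
    obtain ⟨x₂, hx₂, h₂⟩ := hy'
    simp only [mem_insert, mem_singleton, forall_eq_or_imp, forall_eq]
    refine ⟨⟨x₂, hx₂, ?_⟩, ⟨x₁, hx₁, ?_⟩⟩
    · rw [inter_insert_of_mem ((h x₂ hx₂).resolve_right h₂), inter_singleton_of_notMem h₂,
        insert_empty_eq]
    · rw [inter_insert_of_notMem h₁, inter_singleton_of_mem ((h x₁ hx₁).resolve_left h₁)]

end Transversal

section Core

variable {n m : ℕ} {E : Finset (Fin n × Fin m)} {X X₀ : Finset (Fin n)} {C Y : Finset (Fin m)}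
  {x₀ : Fin n} {k : Type*}

/-- Every vertex in `X` is adjacent to all of `C` and to exactly one further vertex. -/
def IsCore (E : Finset (Fin n × Fin m)) (X : Finset (Fin n)) (C : Finset (Fin m)) : Prop :=
  ∀ x ∈ X, C ⊆ nbr E x ∧ #(nbr E x \ C) = 1

lemma IsCore.degG_eq (hC : IsCore E X C) {x : Fin n} (hx : x ∈ X) : degG E x = #C + 1 := by
  rw [degG, ← card_sdiff_add_card_eq_card (hC x hx).1, (hC x hx).2, add_comm]

lemma IsCore.homologyDim_of_subset [CommRing k] [Nontrivial k] (hC : IsCore E X C)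
    (hX : X.Nonempty) (hY : Y ⊆ C) (c : ℤ) :
    homologyDim k (indepComplexOn E X Y) c = if Y.Nonempty ∧ c = 1 then 1 else 0 := by
  obtain rfl | ⟨y, hy⟩ := Y.eq_empty_or_nonempty
  · obtain ⟨x, hx⟩ := hX
    simpa using (acyclic_indepComplexOn_of_disjoint (k := k) hx
      (disjoint_empty_right (nbr E x))).homologyDim_eq_zero c
  · rw [← homologyDim_indepComplexOn_of_dominated_right (singleton_subset_iff.2 hy),
      homologyDim_indepComplexOn_of_minimal
        (minimal_isTransversal_singleton hX fun x hx => (hC x hx).1 (hY hy))]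
    · simp [show Y.Nonempty from ⟨y, hy⟩]
    · exact fun z hz =>
        ⟨y, mem_singleton_self y, fun x hx _ => (hC x hx).1 (hY (mem_sdiff.1 hz).1)⟩

lemma IsCore.homologyDim_of_not_subset [CommRing k] [Nontrivial k] (hC : IsCore E X C)
    (hY : ¬Y ⊆ C) (c : ℤ) : homologyDim k (indepComplexOn E X Y) c =
      if Y \ C = X.biUnion (nbr E) \ C ∧ c = #(X.biUnion (nbr E) \ C) then 1 else 0 := by
  obtain ⟨y, hy⟩ := sdiff_nonempty.2 hY
  rw [← homologyDim_indepComplexOn_of_dominated_right (sdiff_subset (s := Y) (t := C))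
    fun z hz => ⟨y, hy, fun x hx _ => (hC x hx).1 (by grind)⟩]
  by_cases hT : Y \ C = X.biUnion (nbr E) \ C
  · rw [homologyDim_indepComplexOn_of_card_eq_one]
    · simp [hT]
    · intro x hx
      have : nbr E x ∩ (Y \ C) = nbr E x \ C := by
        rw [hT]
        grind
      rw [this, (hC x hx).2]
    · intro z hz
      simpa using (mem_sdiff.1 (hT.le hz)).1
  · rw [if_neg fun h => hT h.1]
    refine Acyclic.homologyDim_eq_zero ?_ c
    by_cases hsub : Y \ C ⊆ X.biUnion (nbr E) \ C
    · obtain ⟨t, ht, htY⟩ := exists_of_ssubset (hsub.ssubset_of_ne hT)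
      obtain ⟨x, hx, hxt⟩ := mem_biUnion.1 (mem_sdiff.1 ht).1
      have hxC : nbr E x \ C = {t} := (eq_of_subset_of_card_le
        (singleton_subset_iff.2 (mem_sdiff.2 ⟨hxt, (mem_sdiff.1 ht).2⟩)) (hC x hx).2.le).symm
      refine acyclic_indepComplexOn_of_disjoint hx (disjoint_left.2 fun z hzx hz => htY ?_)
      have hzt : z ∈ nbr E x \ C := mem_sdiff.2 ⟨hzx, (mem_sdiff.1 hz).2⟩
      rw [hxC, mem_singleton] at hzt
      exact hzt ▸ hz
    · obtain ⟨z, hz, hzT⟩ := not_subset.1 hsub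
      refine acyclic_indepComplexOn_of_notMem_nbr hz fun x hx hxz => hzT ?_
      exact mem_sdiff.2 ⟨mem_biUnion.2 ⟨x, hx, hxz⟩, (mem_sdiff.1 hz).2⟩

lemma bettiCoarse_eq_sum [Field k] (hX : X.Nonempty) (i : ℕ) : bettiCoarse k E i X =
    ∑ Y, homologyDim k (indepComplexOn E X Y) (#X + #Y - i - 1) :=
  sum_congr rfl fun _ _ =>
    bettiFine_indepComplex k (hX.elim fun x hx => ⟨xVert x, xVert_mem_vset.2 hx⟩) i

lemma card_le_bettiCoarse [Field k] (hX : X.Nonempty) {P : Finset (Finset (Fin m))}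
    (hP : ∀ Y ∈ P, Minimal (IsTransversal E X) Y) : #P ≤ bettiCoarse k E (#X - 1) X := by
  rw [bettiCoarse_eq_sum hX, card_eq_sum_ones]
  have hcard := hX.card_pos
  refine (sum_le_sum fun Y hY => ?_).trans (sum_le_univ_sum_of_nonneg fun _ => Nat.zero_le _)
  rw [homologyDim_indepComplexOn_of_minimal (hP Y hY), if_pos (by omega)]

lemma card_filter_sdiff_eq {α : Type*} [Fintype α] [DecidableEq α] {C T : Finset α}
    (hCT : Disjoint C T) (j : ℕ) : #{Y | Y \ C = T ∧ #Y = j + #T} = (#C).choose j := by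
  rw [← card_powersetCard]
  refine card_nbij' (· ∩ C) (· ∪ T) (fun Y hY => ?_) (fun S hS => ?_) (fun Y hY => ?_)
    fun S hS => ?_
  · obtain ⟨rfl, hcard⟩ := (mem_filter.1 hY).2
    have := card_sdiff_add_card_inter Y C
    exact mem_powersetCard.2 ⟨inter_subset_right, show #(Y ∩ C) = j by omega⟩
  · obtain ⟨hSC, rfl⟩ := mem_powersetCard.1 hS
    refine mem_filter.2 ⟨mem_univ _, ?_, card_union_of_disjoint (hCT.mono_left hSC)⟩
    rw [union_sdiff_distrib, sdiff_eq_empty_iff_subset.2 hSC, empty_union,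
      sdiff_eq_self_of_disjoint hCT.symm]
  · obtain ⟨rfl, -⟩ := (mem_filter.1 hY).2
    change Y ∩ C ∪ Y \ C = Y
    rw [union_comm, sdiff_union_inter]
  · have hSC := (mem_powersetCard.1 hS).1
    change (S ∪ T) ∩ C = S
    rw [union_inter_distrib_right, inter_eq_left.2 hSC, inter_comm T,
      disjoint_iff_inter_eq_empty.1 hCT, union_empty]

lemma IsCore.homologyDim_eq [CommRing k] [Nontrivial k] (hC : IsCore E X C) (hX : X.Nonempty)
    (Y : Finset (Fin m)) (c : ℤ) : homologyDim k (indepComplexOn E X Y) c =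
      (if Y ⊆ C ∧ Y.Nonempty ∧ c = 1 then 1 else 0) +
        if Y \ C = X.biUnion (nbr E) \ C ∧ c = #(X.biUnion (nbr E) \ C) then 1 else 0 := by
  by_cases hY : Y ⊆ C
  · have hT : ∅ ≠ X.biUnion (nbr E) \ C := by
      obtain ⟨x, hx⟩ := hX
      obtain ⟨t, ht⟩ := card_pos.1 ((hC x hx).2.symm ▸ one_pos)
      exact (ne_empty_of_mem (mem_of_subset
        (sdiff_subset_sdiff (subset_biUnion_of_mem (nbr E) hx) Subset.rfl) ht)).symm
    rw [hC.homologyDim_of_subset hX hY, sdiff_eq_empty_iff_subset.2 hY]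
    simp [hY, hT]
  · rw [hC.homologyDim_of_not_subset hY]
    simp [hY]

lemma IsCore.bettiCoarse_eq [Field k] (hC : IsCore E X₀ C) (hne : X₀.Nonempty) (hX₀ : X₀ ⊆ X)
    (h : ∀ x ∈ X \ X₀, ∃ x₀ ∈ X₀, nbr E x₀ ⊆ nbr E x) (i : ℕ) :
    bettiCoarse k E i X = if #X ≤ i + 1 then (#C + 1).choose (i + 2 - #X) else 0 := by
  have hfold (Y : Finset (Fin m)) (c : ℤ) : homologyDim k (indepComplexOn E X Y) c =
      homologyDim k (indepComplexOn E X₀ Y) c :=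
    (homologyDim_indepComplexOn_of_dominated_left hX₀ (fun x hx =>
      (h x hx).imp fun _ => And.imp_right inter_subset_left.trans) c).symm
  simp only [bettiCoarse_eq_sum (hne.mono hX₀), hfold, hC.homologyDim_eq hne, sum_add_distrib,
    sum_boole, Nat.cast_id]
  set T := X₀.biUnion (nbr E) \ C
  split_ifs with hi
  · obtain ⟨j, hj⟩ := Nat.exists_eq_add_of_le hi
    rw [show i + 2 - #X = j + 1 by omega, Nat.choose_succ_succ', add_comm,
      ← card_powersetCard (j + 1), ← card_filter_sdiff_eq (disjoint_sdiff : Disjoint C T) j]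
    congr 2
    · ext Y
      rw [mem_filter, mem_filter]
      grind
    · ext Y
      rw [mem_filter, mem_powersetCard, ← card_pos]
      grind
  · simp only [Nat.add_eq_zero_iff, card_eq_zero, filter_eq_empty_iff]
    refine ⟨fun Y _ => ?_, fun Y _ => ?_⟩
    · rintro ⟨-, hY, hc⟩
      have := hY.card_pos
      omega
    · rintro ⟨hY, hc⟩
      have := card_le_card (hY.symm.trans_subset sdiff_subset)
      omega

end Core

section NearlyRowNested

variable {n m : ℕ} {E : Finset (Fin n × Fin m)} {X : Finset (Fin n)} {x₀ : Fin n}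

lemma NearlyRowNested.exists_isCore (h : NearlyRowNested E) {c : ℕ}
    (hX : ∀ x ∈ X, degG E x = c + 1) : ∃ C, IsCore E X C := by
  obtain rfl | ⟨x₁, hx₁⟩ := X.eq_empty_or_nonempty
  · exact ⟨∅, fun x hx => absurd hx (notMem_empty x)⟩
  obtain ⟨C, hC, hcard⟩ := exists_subset_card_eq (h.2 (c + 1) ⟨x₁, hX x₁ hx₁⟩)
  refine ⟨C, fun x hx => ?_⟩
  have hCx : C ⊆ nbr E x := fun y hy => (mem_filter.1 (hC hy)).2 x (hX x hx)
  have hx : #(nbr E x) = c + 1 := hX x hx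
  exact ⟨hCx, by rw [card_sdiff_of_subset hCx]; omega⟩

theorem NearlyRowNested.bettiCoarse_eq (k : Type*) [Field k] (h : NearlyRowNested E)
    (hx₀ : x₀ ∈ X) (hmin : ∀ x ∈ X, degG E x₀ ≤ degG E x) (i : ℕ) :
    bettiCoarse k E i X = if #X ≤ i + 1 then (degG E x₀).choose (i + 2 - #X) else 0 := by
  rcases hdeg : degG E x₀ with _ | c
  · have hY (Y : Finset (Fin m)) : Acyclic k (indepComplexOn E X Y) :=
      acyclic_indepComplexOn_of_disjoint hx₀ (by simp [card_eq_zero.1 hdeg])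
    rw [bettiCoarse_eq_sum ⟨x₀, hx₀⟩, sum_eq_zero fun Y _ => (hY Y).homologyDim_eq_zero _]
    split_ifs with hi
    · rw [Nat.choose_eq_zero_of_lt (by omega)]
    · rfl
  · let X₀ : Finset (Fin n) := {x ∈ X | degG E x = c + 1}
    have hx₀' : x₀ ∈ X₀ := mem_filter.2 ⟨hx₀, hdeg⟩
    obtain ⟨C, hC⟩ := h.exists_isCore fun x hx => (mem_filter.1 hx : x ∈ X ∧ _).2
    rw [hC.bettiCoarse_eq ⟨x₀, hx₀'⟩ (filter_subset _ X), ← hC.degG_eq hx₀', hdeg]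
    intro x hx
    obtain ⟨hxX, hx⟩ := mem_sdiff.1 hx
    refine ⟨x₀, hx₀', (h.1 x₀ x ((hmin x hxX).lt_of_ne fun heq => hx ?_)).subset⟩
    exact mem_filter.2 ⟨hxX, heq.symm.trans hdeg⟩

lemma bettiCoarse_empty (k : Type*) [Field k] (E : Finset (Fin n × Fin m)) (i : ℕ) :
    bettiCoarse k E i ∅ = 0 := by
  refine sum_eq_zero fun Y _ => ?_
  obtain rfl | ⟨y, hy⟩ := Y.eq_empty_or_nonempty
  · simp [bettiFine, vset]
  · rw [bettiFine_indepComplex k ⟨_, yVert_mem_vset.2 hy⟩]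
    exact (acyclic_indepComplexOn_of_notMem_nbr hy (by simp)).homologyDim_eq_zero _

lemma nbr_ferrers (E : Finset (Fin n × Fin m)) (x : Fin n) :
    nbr (ferrers E) x = ({y | (y : ℕ) < degG E x} : Finset (Fin m)) := by
  ext y
  simp [nbr, ferrers]

lemma degG_ferrers (E : Finset (Fin n × Fin m)) (x : Fin n) :
    degG (ferrers E) x = degG E x := by
  have h : degG E x ≤ m := card_finset_fin_le (nbr E x)
  rw [degG, nbr_ferrers, Fin.card_filter_val_lt, min_eq_right h]

lemma nbr_ferrers_subset {E : Finset (Fin n × Fin m)} {x₁ x₂ : Fin n}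
    (h : degG E x₁ ≤ degG E x₂) : nbr (ferrers E) x₁ ⊆ nbr (ferrers E) x₂ := by
  rw [nbr_ferrers, nbr_ferrers]
  exact monotone_filter_right _ fun _ _ hy => hy.trans_le h

lemma nearlyRowNested_ferrers (E : Finset (Fin n × Fin m)) : NearlyRowNested (ferrers E) := by
  have hsub {x₁ x₂ : Fin n} (h : #(nbr (ferrers E) x₁) ≤ #(nbr (ferrers E) x₂)) :
      nbr (ferrers E) x₁ ⊆ nbr (ferrers E) x₂ :=
    nbr_ferrers_subset (by rwa [← degG_ferrers E x₁, ← degG_ferrers E x₂])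
  refine ⟨fun x₁ x₂ h => (hsub h.le).ssubset_of_ne fun heq => h.ne (congrArg card heq), ?_⟩
  rintro _ ⟨x, rfl⟩
  exact (Nat.sub_le _ 1).trans <| card_le_card fun y hy =>
    mem_filter.2 ⟨mem_univ y, fun z hz => hsub hz.ge hy⟩

end NearlyRowNested

section Converse

variable {k : Type*} [Field k] {n m : ℕ} {E : Finset (Fin n × Fin m)} {x x₁ x₂ x₃ : Fin n}

lemma card_le_degG_of_minimal_isTransversal {X : Finset (Fin n)}
    (h : bettiCoarse k E (#X - 1) X = bettiCoarse k (ferrers E) (#X - 1) X)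
    {P : Finset (Finset (Fin m))} (hP : ∀ Y ∈ P, Minimal (IsTransversal E X) Y) (hx : x ∈ X) :
    #P ≤ degG E x := by
  obtain ⟨x₀, hx₀, hmin⟩ := exists_min_image X (degG (ferrers E)) ⟨x, hx⟩
  have hX : 0 < #X := card_pos.2 ⟨x, hx⟩
  calc
    #P ≤ bettiCoarse k E (#X - 1) X := card_le_bettiCoarse ⟨x, hx⟩ hP
    _ = degG (ferrers E) x₀ := by
      rw [h, (nearlyRowNested_ferrers E).bettiCoarse_eq k hx₀ hmin, if_pos (by omega),
        show #X - 1 + 2 - #X = 1 by omega, Nat.choose_one_right]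
    _ ≤ degG (ferrers E) x := hmin x hx
    _ = degG E x := degG_ferrers E x

lemma card_add_card_le_degG {X : Finset (Fin n)}
    (h : bettiCoarse k E (#X - 1) X = bettiCoarse k (ferrers E) (#X - 1) X)
    {S : Finset (Fin m)} (hS : ∀ y ∈ S, ∀ x ∈ X, y ∈ nbr E x) {P : Finset (Finset (Fin m))}
    (hP : ∀ Y ∈ P, Minimal (IsTransversal E X) Y) (hP' : ∀ Y ∈ P, #Y = 2) (hx : x ∈ X) :
    #S + #P ≤ degG E x := by
  have hdisj : Disjoint (S.image singleton) P := by
    refine disjoint_left.2 fun Y hYS hYP => ?_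
    obtain ⟨y, -, rfl⟩ := mem_image.1 hYS
    simpa using hP' _ hYP
  rw [← card_image_of_injective S singleton_injective, ← card_union_of_disjoint hdisj]
  refine card_le_degG_of_minimal_isTransversal h (fun Y hY => ?_) hx
  obtain hY | hY := mem_union.1 hY
  · obtain ⟨y, hy, rfl⟩ := mem_image.1 hY
    exact minimal_isTransversal_singleton ⟨x, hx⟩ (hS y hy)
  · exact hP Y hY

lemma card_sdiff_mul_card_sdiff_le
    (h : ∀ (X : Finset (Fin n)) (i : ℕ), bettiCoarse k E i X = bettiCoarse k (ferrers E) i X)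
    (x₁ x₂ : Fin n) :
    #(nbr E x₁ \ nbr E x₂) * #(nbr E x₂ \ nbr E x₁) ≤ #(nbr E x₁ \ nbr E x₂) := by
  let pairs := (nbr E x₁ \ nbr E x₂) ×ˢ (nbr E x₂ \ nbr E x₁)
  let toFinset (p : Fin m × Fin m) : Finset (Fin m) := {p.1, p.2}
  have hmem {p q : Fin m} : (p, q) ∈ pairs ↔
      (p ∈ nbr E x₁ ∧ p ∉ nbr E x₂) ∧ q ∈ nbr E x₂ ∧ q ∉ nbr E x₁ := by
    simp only [pairs, mem_product, mem_sdiff]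
  have hinj : Set.InjOn toFinset pairs := by
    rintro ⟨p, q⟩ hpq ⟨p', q'⟩ hpq' heq
    simp only [toFinset, mem_coe, hmem, Finset.ext_iff, mem_insert, mem_singleton] at hpq hpq' heq
    have hpp : p = p' :=
      ((heq p).1 (.inl rfl)).resolve_right (by rintro rfl; exact hpq'.2.2 hpq.1.1)
    have hqq : q = q' :=
      ((heq q).1 (.inr rfl)).resolve_left (by rintro rfl; exact hpq'.1.2 hpq.2.1)
    rw [hpp, hqq]
  have hle : #(nbr E x₁ ∩ nbr E x₂) + #(pairs.image toFinset) ≤ degG E x₁ := by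
    refine card_add_card_le_degG (X := {x₁, x₂}) (h _ _) (by simp) ?_ ?_ (mem_insert_self _ _)
    · refine forall_mem_image.2 fun ⟨p, q⟩ hpq => ?_
      rw [hmem] at hpq
      refine minimal_isTransversal_pair ?_ ⟨x₂, ?_⟩ ⟨x₁, ?_⟩ <;> simp [hpq]
    · refine forall_mem_image.2 fun ⟨p, q⟩ hpq => card_pair ?_
      exact ne_of_mem_of_not_mem (hmem.1 hpq).1.1 (hmem.1 hpq).2.2
  rw [card_image_of_injOn hinj, card_product, degG,
    ← card_inter_add_card_sdiff (nbr E x₁) (nbr E x₂)] at hle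
  exact Nat.le_of_add_le_add_left hle

lemma card_sdiff_le_one_of_degG_eq
    (h : ∀ (X : Finset (Fin n)) (i : ℕ), bettiCoarse k E i X = bettiCoarse k (ferrers E) i X)
    (hdeg : degG E x₁ = degG E x₂) : #(nbr E x₁ \ nbr E x₂) ≤ 1 := by
  have hle := card_sdiff_mul_card_sdiff_le h x₁ x₂
  rw [← card_sdiff_comm hdeg] at hle
  by_contra! hlt
  exact hle.not_gt (lt_mul_of_one_lt_left (by omega) hlt)

lemma card_inter_add_two_le_degG
    (h : ∀ (X : Finset (Fin n)) (i : ℕ), bettiCoarse k E i X = bettiCoarse k (ferrers E) i X)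
    {p q u : Fin m} (hp : p ∈ (nbr E x₁ ∩ nbr E x₃) \ nbr E x₂)
    (hq : q ∈ (nbr E x₂ ∩ nbr E x₃) \ nbr E x₁) (hu : u ∈ (nbr E x₁ ∩ nbr E x₂) \ nbr E x₃)
    (hsub : (nbr E x₁ ∩ nbr E x₂).erase u ⊆ nbr E x₃) :
    #(nbr E x₁ ∩ nbr E x₂) + 2 ≤ degG E x₁ := by
  have hu₁₂ := (mem_sdiff.1 hu).1
  simp only [mem_sdiff, mem_inter] at hp hq hu
  have hpq : p ≠ q := ne_of_mem_of_not_mem hp.1.1 hq.2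
  have hpu : p ≠ u := ne_of_mem_of_not_mem hp.1.2 hu.2
  have hqu : q ≠ u := ne_of_mem_of_not_mem hq.1.2 hu.2
  let P : Finset (Finset (Fin m)) := {{p, q}, {p, u}, {q, u}}
  have hP : #P = 3 := by
    refine card_eq_three.2 ⟨_, _, _, ne_of_mem_of_not_mem' (a := q) ?_ ?_,
      ne_of_mem_of_not_mem' (a := p) ?_ ?_, ne_of_mem_of_not_mem' (a := p) ?_ ?_, rfl⟩ <;>
      simp [hpu, hpq, hpq.symm, hqu]
  have hle : #((nbr E x₁ ∩ nbr E x₂).erase u) + #P ≤ degG E x₁ := by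
    refine card_add_card_le_degG (X := {x₁, x₂, x₃}) (h _ _) ?_ ?_ ?_ (mem_insert_self _ _)
    · intro y hy
      obtain ⟨hy₁, hy₂⟩ := mem_inter.1 (mem_of_mem_erase hy)
      simp [hy₁, hy₂, hsub hy]
    · simp only [P, mem_insert, mem_singleton, forall_eq_or_imp, forall_eq]
      refine ⟨minimal_isTransversal_pair ?_ ⟨x₂, ?_⟩ ⟨x₁, ?_⟩,
        minimal_isTransversal_pair ?_ ⟨x₂, ?_⟩ ⟨x₃, ?_⟩,
        minimal_isTransversal_pair ?_ ⟨x₁, ?_⟩ ⟨x₃, ?_⟩⟩ <;> simp [hp, hq, hu]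
    · simp only [P, mem_insert, mem_singleton, forall_eq_or_imp, forall_eq]
      exact ⟨card_pair hpq, card_pair hpu, card_pair hqu⟩
  have := card_erase_add_one hu₁₂
  omega

lemma inter_nbr_subset_nbr
    (h : ∀ (X : Finset (Fin n)) (i : ℕ), bettiCoarse k E i X = bettiCoarse k (ferrers E) i X)
    (h₁₂ : degG E x₁ = degG E x₂) (h₁₃ : degG E x₁ = degG E x₃) (hne : nbr E x₁ ≠ nbr E x₂) :
    nbr E x₁ ∩ nbr E x₂ ⊆ nbr E x₃ := by
  intro u hu
  by_contra hu₃
  obtain ⟨hu₁, hu₂⟩ := mem_inter.1 hu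
  have hmem₃ {x : Fin n} (hx : degG E x = degG E x₃) (hux : u ∈ nbr E x) {y : Fin m}
      (hy : y ∈ nbr E x) (hyu : y ≠ u) : y ∈ nbr E x₃ := by
    by_contra hy₃
    exact hyu (card_le_one.1 (card_sdiff_le_one_of_degG_eq h hx) _ (mem_sdiff.2 ⟨hy, hy₃⟩) _
      (mem_sdiff.2 ⟨hux, hu₃⟩))
  obtain ⟨p, hp₁, hp₂⟩ := not_subset.1 fun hsub => hne (eq_of_subset_of_card_le hsub h₁₂.ge)
  obtain ⟨q, hq₂, hq₁⟩ := not_subset.1 fun hsub => hne (eq_of_subset_of_card_le hsub h₁₂.le).symm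
  have hp₃ : p ∈ nbr E x₃ := hmem₃ h₁₃ hu₁ hp₁ (ne_of_mem_of_not_mem hu₂ hp₂).symm
  have hq₃ : q ∈ nbr E x₃ := hmem₃ (h₁₂.symm.trans h₁₃) hu₂ hq₂ (ne_of_mem_of_not_mem hu₁ hq₁).symm
  have hsub : (nbr E x₁ ∩ nbr E x₂).erase u ⊆ nbr E x₃ := fun y hy =>
    hmem₃ h₁₃ hu₁ (mem_inter.1 (mem_of_mem_erase hy)).1 (ne_of_mem_erase hy)
  have hle : #(nbr E x₁ ∩ nbr E x₂) + 2 ≤ degG E x₁ :=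
    card_inter_add_two_le_degG h (mem_sdiff.2 ⟨mem_inter.2 ⟨hp₁, hp₃⟩, hp₂⟩)
      (mem_sdiff.2 ⟨mem_inter.2 ⟨hq₂, hq₃⟩, hq₁⟩) (mem_sdiff.2 ⟨hu, hu₃⟩) hsub
  have hone := card_sdiff_le_one_of_degG_eq h h₁₂
  rw [degG, ← card_inter_add_card_sdiff (nbr E x₁) (nbr E x₂)] at hle
  omega

theorem nearlyRowNested_of_bettiCoarse_eq
    (h : ∀ (X : Finset (Fin n)) (i : ℕ), bettiCoarse k E i X = bettiCoarse k (ferrers E) i X) :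
    NearlyRowNested E := by
  refine ⟨fun x₁ x₂ hlt => ?_, ?_⟩
  · refine ssubset_of_subset_of_ne ?_ fun heq => hlt.ne (congrArg card heq)
    have hle := card_sdiff_mul_card_sdiff_le h x₁ x₂
    have hlt' := card_sdiff_lt_card_sdiff_iff.2 hlt
    rw [← sdiff_eq_empty_iff_subset, ← card_eq_zero]
    by_contra hne
    exact hle.not_gt (lt_mul_of_one_lt_right (by omega) (by omega))
  · rintro _ ⟨x₁, rfl⟩
    by_cases hall : ∀ x, degG E x = degG E x₁ → nbr E x = nbr E x₁
    · exact (Nat.sub_le _ 1).trans <| card_le_card fun y hy =>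
        mem_filter.2 ⟨mem_univ y, fun x hx => (hall x hx).symm ▸ hy⟩
    · push Not at hall
      obtain ⟨x₂, h₂, hne⟩ := hall
      have hone := card_sdiff_le_one_of_degG_eq h h₂.symm
      have hinter := card_inter_add_card_sdiff (nbr E x₁) (nbr E x₂)
      calc
        #(nbr E x₁) - 1 ≤ #(nbr E x₁ ∩ nbr E x₂) := by omega
        _ ≤ _ := card_le_card fun y hy => mem_filter.2 ⟨mem_univ y, fun x hx =>
          inter_nbr_subset_nbr h h₂.symm (hx.symm : degG E x₁ = degG E x) hne.symm hy⟩

end Converse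

/-- **Theorem (Nagel–Reiner, Proposition 4.18).**  For a bipartite graph `G`
on `X ⊔ Y` with edge ideal `I` and associated Ferrers ideal `J`:
`β_{i,X',•}(I) = β_{i,X',•}(J)` holds for all `X' ⊆ X` and all `i ≥ 0` if and
only if `G` is nearly row-nested. -/
theorem betti_eq_ferrers_iff_nearlyRowNested (k : Type*) [Field k] (n m : ℕ)
    (E : Finset (Fin n × Fin m)) :
    (∀ (X' : Finset (Fin n)) (i : ℕ),
        bettiCoarse k E i X' = bettiCoarse k (ferrers E) i X') ↔
      NearlyRowNested E := by
  refine ⟨nearlyRowNested_of_bettiCoarse_eq, fun h X i => ?_⟩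
  obtain rfl | hX := X.eq_empty_or_nonempty
  · rw [bettiCoarse_empty, bettiCoarse_empty]
  · obtain ⟨x₀, hx₀, hmin⟩ := exists_min_image X (degG E) hX
    rw [h.bettiCoarse_eq k hx₀ hmin, (nearlyRowNested_ferrers E).bettiCoarse_eq k hx₀
        (by simpa only [degG_ferrers] using hmin), degG_ferrers]
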